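/- Let 𝔤 be a restricted Lie algebra over F of characteristic p > 0 and (φ, ω) ∈ C²_*(𝔤) a restricted 2-cocycle (d²_*(φ,ω) = 0). Define 𝔊 = 𝔤 ⊕ F·c with bracket [g + αc, h + βc]_𝔊 = [g,h]_𝔤 + φ(g ∧ h)c and p-operation (g + αc)^{[p]_𝔊} = g^{[p]_𝔤} + (ω(g) + appropriate term) c with c^{[p]} = 0 and c central. Then 𝔊 is a restricted Lie algebra, i.e., the bracket satisfies the Jacobi identity and the [p]-operation satisfies the three restricted Lie algebra axioms. -/

import Mathlib

open Finset Polynomial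

/-- The Heisenberg Lie bracket on `F^(2m+1)`: `[e_i, e_{m+i}] = e_{2m}` (0-indexed),
with `e_{2m}` (the last basis vector) playing the role of the central element `e_{2m+1}`. -/
def hBr (F : Type*) [Field F] (m : ℕ) (g h : Fin (2*m+1) → F) : Fin (2*m+1) → F :=
  Pi.single (Fin.last (2*m))
    (∑ i : Fin m,
      (g ⟨i.1, by have := i.2; omega⟩ * h ⟨m + i.1, by have := i.2; omega⟩
        - g ⟨m + i.1, by have := i.2; omega⟩ * h ⟨i.1, by have := i.2; omega⟩))

/-- The central basis vector `e_{2m+1}` of the Heisenberg algebra. -/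
def eC (F : Type*) [Field F] (m : ℕ) : Fin (2*m+1) → F := Pi.single (Fin.last (2*m)) 1

/-- Extension of a bilinear bracket on `F^n` to `(Polynomial F)^n` via structure constants. -/
noncomputable def brP (F : Type*) [Field F] (n : ℕ)
    (br : (Fin n → F) → (Fin n → F) → (Fin n → F))
    (x y : Fin n → Polynomial F) : Fin n → Polynomial F :=
  fun k => ∑ i : Fin n, ∑ j : Fin n,
    x i * y j * Polynomial.C (br (Pi.single i 1) (Pi.single j 1) k)

/-- `(ad (t g + h))^(p-1) (g)` computed with polynomial coefficients in `t`. -/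
noncomputable def adP (F : Type*) [Field F] (n p : ℕ)
    (br : (Fin n → F) → (Fin n → F) → (Fin n → F)) (g h : Fin n → F) :
    Fin n → Polynomial F :=
  (fun z => brP F n br ((Polynomial.X : Polynomial F) • (fun j => Polynomial.C (g j))
      + (fun j => Polynomial.C (h j))) z)^[p-1] (fun j => Polynomial.C (g j))

/-- The total correction term `Σ_{i=1}^{p-1} s_i(g,h)`, where `i·s_i(g,h)` is the coefficient
of `t^{i-1}` in `(ad (t g + h))^{p-1}(g)`. -/
noncomputable def sSum (F : Type*) [Field F] (n p : ℕ)
    (br : (Fin n → F) → (Fin n → F) → (Fin n → F)) (g h : Fin n → F) : Fin n → F :=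
  ∑ i ∈ Finset.range (p-1),
    (((i+1 : ℕ) : F))⁻¹ • (fun k => (adP F n p br g h k).coeff i)

/-- The three axioms of a `[p]`-operator on the Lie algebra `(F^n, br)`. -/
def IsPMap (F : Type*) [Field F] (n p : ℕ)
    (br : (Fin n → F) → (Fin n → F) → (Fin n → F))
    (pmap : (Fin n → F) → (Fin n → F)) : Prop :=
  (∀ (a : F) (g : Fin n → F), pmap (a • g) = a ^ p • pmap g) ∧
  (∀ g h, pmap (g + h) = pmap g + pmap h + sSum F n p br g h) ∧
  (∀ g h, br (pmap g) h = (fun x => br g x)^[p] h)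

/-- Bilinearity of a map `φ : F^n → F^n → F`. -/
def IsBil (F : Type*) [Field F] (n : ℕ) (φ : (Fin n → F) → (Fin n → F) → F) : Prop :=
  (∀ (a : F) (x y z : Fin n → F), φ (a • x + y) z = a * φ x z + φ y z) ∧
  (∀ (a : F) (x y z : Fin n → F), φ x (a • y + z) = a * φ x y + φ x z)

/-- Left-normed iterated bracket: `lnbSeq br s k = [s 0, s 1, …, s k]`. -/
def lnbSeq (F : Type*) [Field F] (n : ℕ)
    (br : (Fin n → F) → (Fin n → F) → (Fin n → F)) (s : ℕ → Fin n → F) :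
    ℕ → (Fin n → F)
  | 0 => s 0
  | (k+1) => br (lnbSeq F n br s k) (s (k+1))

/-- The sequence `g_1 = g, g_2 = h, g_{j+2} = g or h` according to `l j`. -/
def cseq (F : Type*) [Field F] (n : ℕ) (g h : Fin n → F) (l : ℕ → Bool) :
    ℕ → Fin n → F :=
  fun j => if j = 0 then g else if j = 1 then h else if l (j - 2) then g else h

/-- `φ`-compatibility of `ω : 𝔤 → F`: `ω(a g) = a^p ω(g)` and
`ω(g+h) = ω(g) + ω(h) + Σ (1/#(g)) φ([g_1,…,g_{p-1}] ∧ g_p)`, the sum over all sequences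
`g_i ∈ {g, h}` with `g_1 = g`, `g_2 = h`, where `#(g)` is the number of factors equal to `g`. -/
def Compat (F : Type*) [Field F] (n p : ℕ)
    (br : (Fin n → F) → (Fin n → F) → (Fin n → F))
    (φ : (Fin n → F) → (Fin n → F) → F) (ω : (Fin n → F) → F) : Prop :=
  (∀ (a : F) (g : Fin n → F), ω (a • g) = a ^ p * ω g) ∧
  (∀ g h, ω (g + h) = ω g + ω h +
    ∑ l : Fin (p-2) → Bool,
      (((1 + (Finset.univ.filter (fun i => l i = true)).card : ℕ) : F))⁻¹ *
        φ (lnbSeq F n br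
            (cseq F n g h (fun j => if hj : j < p-2 then l ⟨j, hj⟩ else false)) (p-2))
          (cseq F n g h (fun j => if hj : j < p-2 then l ⟨j, hj⟩ else false) (p-1)))

def extB (m : ℕ) (l : Fin m → Bool) : ℕ → Bool := fun j => if hj : j < m then l ⟨j, hj⟩ else false

def cntB (m : ℕ) (l : Fin m → Bool) : ℕ := (Finset.univ.filter (fun i => l i = true)).card

def Acoef {V : Type*} [AddCommGroup V] (br : V → V → V) (g h : V) : ℕ → ℕ → V
  | 0, i => if i = 0 then g else 0
  | (m+1), 0 => br h (Acoef br g h m 0)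
  | (m+1), (i+1) => br h (Acoef br g h m (i+1)) + br g (Acoef br g h m i)

section
variable {F : Type*} [Field F] {n : ℕ} {br : (Fin n → F) → (Fin n → F) → (Fin n → F)}

def mkL (br : (Fin n → F) → (Fin n → F) → (Fin n → F))
    (hbil : ∀ (a : F) (x y z : Fin n → F),
      br (a • x + y) z = a • br x z + br y z ∧ br z (a • x + y) = a • br z x + br z y) :
    (Fin n → F) →ₗ[F] (Fin n → F) →ₗ[F] (Fin n → F) :=
  LinearMap.mk₂ F br
    (fun x y z => by simpa using (hbil 1 x y z).1)
    (fun a x z => by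
      have h0 : br 0 z = 0 := by simpa using (hbil 1 0 0 z).1
      simpa [h0] using (hbil a x 0 z).1)
    (fun z x y => by simpa using (hbil 1 x y z).2)
    (fun a z x => by
      have h0 : br z 0 = 0 := by simpa using (hbil 1 0 0 z).2
      simpa [h0] using (hbil a x 0 z).2)

theorem br_expand (B : (Fin n → F) →ₗ[F] (Fin n → F) →ₗ[F] (Fin n → F)) (x y : Fin n → F)
    (k : Fin n) :
    B x y k = ∑ i, ∑ j, x i * y j * B (Pi.single i 1) (Pi.single j 1) k := by
  have hx : x = ∑ i, x i • (Pi.single i (1 : F) : Fin n → F) := pi_eq_sum_univ' x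
  have hy : y = ∑ i, y i • (Pi.single i (1 : F) : Fin n → F) := pi_eq_sum_univ' y
  conv_lhs => rw [hx, hy]
  simp only [map_sum, LinearMap.sum_apply, map_smul, LinearMap.smul_apply, Finset.sum_apply,
    Pi.smul_apply, smul_eq_mul, Finset.mul_sum]
  rw [Finset.sum_comm]
  refine Finset.sum_congr rfl fun i _ => Finset.sum_congr rfl fun j _ => ?_
  ring

theorem brP_coeff_zero (B : (Fin n → F) →ₗ[F] (Fin n → F) →ₗ[F] (Fin n → F)) (g h : Fin n → F)
    (z : Fin n → Polynomial F) (k : Fin n) :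
    (brP F n (fun x y => B x y) ((Polynomial.X : Polynomial F) • (fun j => Polynomial.C (g j))
      + (fun j => Polynomial.C (h j))) z k).coeff 0 = B h (fun j => (z j).coeff 0) k := by
  rw [br_expand]
  simp [brP]

theorem brP_coeff_succ (B : (Fin n → F) →ₗ[F] (Fin n → F) →ₗ[F] (Fin n → F)) (g h : Fin n → F)
    (z : Fin n → Polynomial F) (k : Fin n) (i : ℕ) :
    (brP F n (fun x y => B x y) ((Polynomial.X : Polynomial F) • (fun j => Polynomial.C (g j))
      + (fun j => Polynomial.C (h j))) z k).coeff (i+1) =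
      B h (fun j => (z j).coeff (i+1)) k + B g (fun j => (z j).coeff i) k := by
  rw [br_expand B h, br_expand B g]
  simp [brP, add_mul, mul_assoc, Polynomial.coeff_X_mul,
    Finset.sum_add_distrib, add_comm]

theorem iter_coeff (B : (Fin n → F) →ₗ[F] (Fin n → F) →ₗ[F] (Fin n → F)) (g h : Fin n → F)
    (m : ℕ) : ∀ i,
    (fun k => (((fun z => brP F n (fun x y => B x y)
      ((Polynomial.X : Polynomial F) • (fun j => Polynomial.C (g j))
      + (fun j => Polynomial.C (h j))) z)^[m] (fun j => Polynomial.C (g j))) k).coeff i)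
      = Acoef (fun x y => B x y) g h m i := by
  induction m with
  | zero =>
    intro i
    ext k
    by_cases hi : i = 0 <;> simp [Acoef, hi, Polynomial.coeff_C]
  | succ m ih =>
    intro i
    ext k
    rw [Function.iterate_succ_apply']
    cases i with
    | zero => rw [brP_coeff_zero, ih 0]; rfl
    | succ i => rw [brP_coeff_succ, ih i, ih (i+1)]; rfl

theorem cntB_snoc (m : ℕ) (l : Fin m → Bool) (b : Bool) :
    cntB (m+1) (Fin.snoc l b : Fin (m+1) → Bool) = cntB m l + if b then 1 else 0 := by
  simp only [cntB, Finset.card_filter, Fin.sum_univ_castSucc, Fin.snoc_castSucc, Fin.snoc_last]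

theorem extB_snoc_lt (m : ℕ) (l : Fin m → Bool) (b : Bool) (j : ℕ) (hj : j < m) :
    extB (m+1) (Fin.snoc l b : Fin (m+1) → Bool) j = extB m l j := by
  have h1 : j < m + 1 := by omega
  simp only [extB, h1, hj, dif_pos]
  exact Fin.snoc_castSucc (α := fun _ => Bool) b l ⟨j, hj⟩

theorem extB_snoc_last (m : ℕ) (l : Fin m → Bool) (b : Bool) :
    extB (m+1) (Fin.snoc l b : Fin (m+1) → Bool) m = b := by
  simp only [extB, Nat.lt_succ_self, dif_pos]
  exact Fin.snoc_last (α := fun _ => Bool) b l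

theorem lnb_congr (s t : ℕ → Fin n → F) (k : ℕ) (h : ∀ j ≤ k, s j = t j) :
    lnbSeq F n br s k = lnbSeq F n br t k := by
  induction k with
  | zero => exact h 0 le_rfl
  | succ k ih => simp only [lnbSeq]; rw [ih (fun j hj => h j (by omega)), h (k+1) le_rfl]

theorem lnb_snoc (g h : Fin n → F) (m : ℕ) (l : Fin m → Bool) (b : Bool) :
    lnbSeq F n br (cseq F n g h (extB (m+1) (Fin.snoc l b : Fin (m+1) → Bool))) (m+2) =
      br (lnbSeq F n br (cseq F n g h (extB m l)) (m+1)) (if b then g else h) := by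
  rw [lnbSeq]
  congr 1
  · apply lnb_congr
    intro j hj
    unfold cseq
    split_ifs <;> try rfl
    all_goals rename_i h0 h1 h2 h3
    all_goals rw [extB_snoc_lt _ _ _ _ (by omega)] at h2; simp_all
  · simp [cseq, extB_snoc_last]

theorem skew (B : (Fin n → F) →ₗ[F] (Fin n → F) →ₗ[F] (Fin n → F)) (halt : ∀ x, B x x = 0)
    (x y : Fin n → F) : B x y = - B y x := by
  have := halt (x + y)
  simp only [map_add, LinearMap.add_apply, halt, zero_add, add_zero] at this
  exact eq_neg_of_add_eq_zero_right this

theorem Acoef_word (B : (Fin n → F) →ₗ[F] (Fin n → F) →ₗ[F] (Fin n → F))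
    (halt : ∀ x, B x x = 0) (g h : Fin n → F) (m : ℕ) : ∀ i,
    Acoef (fun x y => B x y) g h (m+1) i = ∑ l : Fin m → Bool,
      if cntB m l = i then (-1 : F)^(m+1) • lnbSeq F n (fun x y => B x y)
        (cseq F n g h (extB m l)) (m+1) else 0 := by
  induction m with
  | zero =>
    intro i
    rcases i with _ | _ | i <;>
      simp [Acoef, cntB, lnbSeq, cseq, halt]
    exact skew B halt _ _
  | succ m ih =>
    intro i
    rw [← (Fin.snocEquiv (fun _ : Fin (m+1) => Bool)).sum_comp, Fintype.sum_prod_type,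
      Fintype.sum_bool]
    simp only [Fin.snocEquiv, Equiv.coe_fn_mk]
    simp only [cntB_snoc, lnb_snoc]
    cases i with
    | zero =>
      rw [Acoef, ih]
      simp only [map_sum]
      rw [Finset.sum_eq_zero (fun l _ => if_neg (by simp)), zero_add]
      refine Finset.sum_congr rfl fun l _ => ?_
      simp only [add_zero, Bool.false_eq_true, if_false]
      split_ifs
      · rw [map_smul, pow_succ _ (m+1), skew B halt]; simp
      · simp
    | succ i =>
      rw [Acoef, ih, ih, add_comm]
      simp only [map_sum]
      congr 1
      all_goals
        refine Finset.sum_congr rfl fun l _ => ?_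
        simp only [if_true, add_left_inj, add_zero, Bool.false_eq_true, if_false]
        split_ifs
        · rw [map_smul, pow_succ _ (m+1), skew B halt]; simp
        · simp

theorem sSum_word (B : (Fin n → F) →ₗ[F] (Fin n → F) →ₗ[F] (Fin n → F))
    (halt : ∀ x, B x x = 0) (p q : ℕ) [Fact p.Prime] [CharP F p] (hq : p = q + 2)
    (g h : Fin n → F) :
    sSum F n p (fun x y => B x y) g h = ∑ l : Fin q → Bool, (((1 + cntB q l : ℕ) : F))⁻¹ •
      lnbSeq F n (fun x y => B x y) (cseq F n g h (extB q l)) (q+1) := by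
  have hs : (-1 : F)^(q+1) = 1 := by
    have h1 : (-1 : F)^p = -1 := by
      have := ExpChar.prime (R := F) (Fact.out : p.Prime)
      exact neg_one_pow_expChar F p
    rw [hq, pow_succ] at h1
    simpa using h1
  have hp : p - 1 = q + 1 := by omega
  unfold sSum adP
  simp only [hp, iter_coeff, Acoef_word B halt, hs, one_smul, Finset.smul_sum]
  rw [Finset.sum_comm]
  refine Finset.sum_congr rfl fun l _ => ?_
  rw [Finset.sum_eq_single (cntB q l)]
  · simp [add_comm]
  · intro b _ hb
    rw [if_neg (Ne.symm hb), smul_zero]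
  · intro hh
    exfalso
    apply hh
    rw [Finset.mem_range]
    have : cntB q l ≤ q := by
      unfold cntB
      exact (Finset.card_filter_le _ _).trans (by simp)
    omega
end

/-- if `(φ, ω)` is a restricted 2-cocycle of a restricted Lie algebra `𝔤`, the
one-dimensional central extension `𝔊 = 𝔤 ⊕ F·c` with `[g+αc, h+βc] = [g,h] + φ(g∧h)c`,
`(g+αc)^{[p]} = g^{[p]} + ω(g)c`, `c` central and `c^{[p]} = 0, is a restricted Lie algebra. -/
theorem restricted_central_extension (F : Type*) [Field F] (n p : ℕ) [Fact p.Prime]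
    [CharP F p]
    (br : (Fin n → F) → (Fin n → F) → (Fin n → F))
    (hbil : ∀ (a : F) (x y z : Fin n → F),
      br (a • x + y) z = a • br x z + br y z ∧ br z (a • x + y) = a • br z x + br z y)
    (halt : ∀ g, br g g = 0)
    (hjac : ∀ g h f, br (br g h) f + br (br h f) g + br (br f g) h = 0)
    (pmap : (Fin n → F) → (Fin n → F))
    (hres : IsPMap F n p br pmap)
    (φ : (Fin n → F) → (Fin n → F) → F)
    (hφbil : IsBil F n φ) (hφalt : ∀ g, φ g g = 0)
    (ω : (Fin n → F) → F)
    (hcomp : Compat F n p br φ ω)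
    (hco : ∀ g h f, φ (br g h) f - φ (br g f) h + φ (br h f) g = 0)
    (hind : ∀ g h, φ g (pmap h) - φ ((fun z => br z h)^[p-1] g) h = 0) :
    let brG : (Fin (n+1) → F) → (Fin (n+1) → F) → (Fin (n+1) → F) :=
      fun x y => Fin.snoc (br (Fin.init x) (Fin.init y)) (φ (Fin.init x) (Fin.init y));
    let pmapG : (Fin (n+1) → F) → (Fin (n+1) → F) :=
      fun x => Fin.snoc (pmap (Fin.init x)) (ω (Fin.init x));
    (∀ (a : F) (x y z : Fin (n+1) → F),
      brG (a • x + y) z = a • brG x z + brG y z ∧ brG z (a • x + y) = a • brG z x + brG z y) ∧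
    (∀ x, brG x x = 0) ∧
    (∀ x y z, brG (brG x y) z + brG (brG y z) x + brG (brG z x) y = 0) ∧
    IsPMap F (n+1) p brG pmapG := by
  intro brG pmapG
  have hbilG : ∀ (a : F) (x y z : Fin (n+1) → F),
      brG (a • x + y) z = a • brG x z + brG y z ∧
        brG z (a • x + y) = a • brG z x + brG z y := by
    intro a x y z
    have hi : Fin.init (a • x + y) = a • Fin.init x + (Fin.init y : Fin n → F) := rfl
    constructor
    · ext k
      refine Fin.lastCases ?_ (fun k => ?_) k
      · simp [brG, hi, hφbil.1]
      · simp [brG, hi, (hbil _ _ _ _).1]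
    · ext k
      refine Fin.lastCases ?_ (fun k => ?_) k
      · simp [brG, hi, hφbil.2]
      · simp [brG, hi, (hbil _ _ _ _).2]
  have haltG : ∀ x, brG x x = 0 := by
    intro x
    ext k
    refine Fin.lastCases ?_ (fun k => ?_) k <;> simp [brG, halt, hφalt]
  have hinit : ∀ x y, Fin.init (brG x y) = br (Fin.init x) (Fin.init y) := fun x y => by
    simp [brG]
  have hlast : ∀ x y, brG x y (Fin.last n) = φ (Fin.init x) (Fin.init y) := fun x y => by
    simp [brG]
  have hcs : ∀ x y k, brG x y (Fin.castSucc k) = br (Fin.init x) (Fin.init y) k :=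
    fun x y k => by simp [brG]
  have hskew : ∀ x y, br x y = - br y x := fun x y => skew (mkL br hbil) halt x y
  have hφadd : ∀ x y z, φ (x + y) z = φ x z + φ y z := fun x y z => by
    simpa using hφbil.1 1 x y z
  have hφadd' : ∀ x y z, φ z (x + y) = φ z x + φ z y := fun x y z => by
    simpa using hφbil.2 1 z x y
  have hφ0 : ∀ z, φ 0 z = 0 := fun z => by simpa using hφadd 0 0 z
  have hφskew : ∀ x y, φ x y = - φ y x := fun x y => by
    have := hφalt (x + y)
    simp only [hφadd, hφadd', hφalt, zero_add, add_zero] at this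
    exact eq_neg_of_add_eq_zero_left this
  have hφneg : ∀ x z, φ (-x) z = - φ x z := fun x z => by
    have := hφadd x (-x) z
    rw [add_neg_cancel, hφ0] at this
    exact eq_neg_of_add_eq_zero_right this.symm
  have hp2 := (Fact.out : p.Prime).two_le
  obtain ⟨q, hq⟩ : ∃ q, p = q + 2 := ⟨p - 2, by omega⟩
  have hs : (-1 : F)^(q+1) = 1 := by
    have h1 : (-1 : F)^p = -1 := by
      have := ExpChar.prime (R := F) (Fact.out : p.Prime)
      exact neg_one_pow_expChar F p
    rw [hq, pow_succ] at h1
    simpa using h1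
  refine ⟨hbilG, haltG, ?_, ?_, ?_, ?_⟩
  · intro x y z
    ext k
    refine Fin.lastCases ?_ (fun k => ?_) k
    · simp only [Pi.add_apply, hlast, hinit, Pi.zero_apply]
      have := hco (Fin.init x) (Fin.init y) (Fin.init z)
      rw [hskew (Fin.init z) (Fin.init x), hφneg]
      linear_combination this
    · simp only [Pi.add_apply, hcs, hinit]
      exact congrFun (hjac (Fin.init x) (Fin.init y) (Fin.init z)) k
  · intro a g
    have hi : Fin.init (a • g) = a • (Fin.init g : Fin n → F) := rfl
    ext k
    refine Fin.lastCases ?_ (fun k => ?_) k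
    · simp [pmapG, hi, hcomp.1]
    · simp [pmapG, hi, hres.1]
  · intro g h
    have hi : Fin.init (g + h) = Fin.init g + (Fin.init h : Fin n → F) := rfl
    have e1 : sSum F (n+1) p brG g h = _ := sSum_word (mkL brG hbilG) haltG p q hq g h
    have e2 : sSum F n p br (Fin.init g) (Fin.init h) = _ :=
      sSum_word (mkL br hbil) halt p q hq (Fin.init g) (Fin.init h)
    have hc : ∀ (l : ℕ → Bool) j, Fin.init (cseq F (n+1) g h l j) =
        cseq F n (Fin.init g) (Fin.init h) l j := by
      intro l j
      unfold cseq
      split_ifs <;> rfl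
    have hl : ∀ (l : ℕ → Bool) k, Fin.init (lnbSeq F (n+1) brG (cseq F (n+1) g h l) k) =
        lnbSeq F n br (cseq F n (Fin.init g) (Fin.init h) l) k := by
      intro l k
      induction k with
      | zero => exact hc l 0
      | succ k ih => rw [lnbSeq, lnbSeq, hinit, ih, hc]
    change sSum F (n+1) p brG g h = ∑ l : Fin q → Bool, (((1 + cntB q l : ℕ) : F))⁻¹ •
      lnbSeq F (n+1) brG (cseq F (n+1) g h (extB q l)) (q+1) at e1
    change sSum F n p br (Fin.init g) (Fin.init h) = ∑ l : Fin q → Bool,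
      (((1 + cntB q l : ℕ) : F))⁻¹ •
      lnbSeq F n br (cseq F n (Fin.init g) (Fin.init h) (extB q l)) (q+1) at e2
    ext k
    refine Fin.lastCases ?_ (fun k => ?_) k
    · have h2 := hcomp.2 (Fin.init g) (Fin.init h)
      subst hq
      simp only [Pi.add_apply, pmapG, hi, Fin.snoc_last, e1, Finset.sum_apply, Pi.smul_apply,
        smul_eq_mul, lnbSeq, hlast, hl, hc]
      exact h2
    · have h2 := congrFun (hres.2.1 (Fin.init g) (Fin.init h)) k
      rw [e2] at h2
      simp only [Pi.add_apply, pmapG, hi, Fin.snoc_castSucc, e1, Finset.sum_apply, Pi.smul_apply]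
      rw [h2]
      simp only [Pi.add_apply, Finset.sum_apply, Pi.smul_apply, ← hl]
      rfl
  · intro g h
    have hit : ∀ m, Fin.init ((fun x => brG g x)^[m] h) =
        (fun x => br (Fin.init g) x)^[m] (Fin.init h) := by
      intro m
      induction m with
      | zero => rfl
      | succ m ih => rw [Function.iterate_succ_apply', Function.iterate_succ_apply', hinit, ih]
    have hsg : ∀ m, (fun x => br (Fin.init g) x)^[m] (Fin.init h) =
        (-1 : F)^m • (fun z => br z (Fin.init g))^[m] (Fin.init h) := by
      intro m
      induction m with
      | zero => simp
      | succ m ih =>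
        rw [Function.iterate_succ_apply', Function.iterate_succ_apply', ih, hskew]
        have := ((mkL br hbil).flip (Fin.init g)).map_smul ((-1 : F)^m)
          ((fun z => br z (Fin.init g))^[m] (Fin.init h))
        change br _ _ = _ • br _ _ at this
        rw [this, pow_succ]
        simp
    have hpi : Fin.init (pmapG g) = pmap (Fin.init g) := by simp [pmapG]
    ext k
    refine Fin.lastCases ?_ (fun k => ?_) k
    · rw [hlast, hpi]
      have h3 := hind (Fin.init h) (Fin.init g)
      subst hq
      rw [Function.iterate_succ_apply', hlast, hit, hsg, hs, one_smul, hφskew, hφskew (Fin.init g)]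
      rw [sub_eq_zero] at h3
      rw [h3]
      rfl
    · rw [hcs, hpi, hres.2.2, ← hit]
      rfl
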